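/- Let n ≥ 1, d ∈ ℝ^n with d > 0 entrywise, and y ∈ ℝ^n. If the extreme point map E_{d,y} : S_n → ℝ^n is not injective, then at least one of the following holds: (i) the map i ↦ y_i/d_i is not injective on {1,…,n}, i.e., there exist i ≠ j with y_i/d_i = y_j/d_j; or (ii) d is not well-structured. -/

import Mathlib

open Finset

noncomputable def th {n : ℕ} (d y : Fin n → ℝ) (c : ℝ) : ℝ :=
  sInf ((fun i => (∑ j, max (y j - y i / d i * d j) 0) + y i / d i * c) ''
    {i : Fin n | 0 < d i})

noncomputable def psum {n : ℕ} (d : Fin n → ℝ) (σ : Equiv.Perm (Fin n)) (j : ℕ) : ℝ :=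
  ∑ i ∈ Finset.univ.filter (fun i : Fin n => (i : ℕ) < j), d (σ i)

noncomputable def Emap {n : ℕ} (d y : Fin n → ℝ) (σ : Equiv.Perm (Fin n)) : Fin n → ℝ :=
  fun k => th d y (psum d σ ((σ.symm k : ℕ) + 1)) - th d y (psum d σ (σ.symm k : ℕ))

def dStoch {n : ℕ} (d : Fin n → ℝ) (A : Matrix (Fin n) (Fin n) ℝ) : Prop :=
  (∀ i j, 0 ≤ A i j) ∧ (∀ j, ∑ i, A i j = 1) ∧ A.mulVec d = d

def Mset {n : ℕ} (d y : Fin n → ℝ) : Set (Fin n → ℝ) :=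
  {x | ∃ A : Matrix (Fin n) (Fin n) ℝ, dStoch d A ∧ A.mulVec y = x}

noncomputable def Aentry {n : ℕ} (d : Fin n → ℝ) (σ τ : Equiv.Perm (Fin n))
    (α : ℕ → Fin n) (j k : Fin n) : ℝ :=
  if k = α j.val ∧ (α j.val).val < (α (j.val + 1)).val then
    (psum d τ ((α j.val).val + 1) - psum d σ j.val) / d (τ (α j.val))
  else if (α j.val).val < k.val ∧ k.val < (α (j.val + 1)).val then 1
  else if (α j.val).val < (α (j.val + 1)).val ∧ k = α (j.val + 1) then
    (psum d σ (j.val + 1) - psum d τ (α (j.val + 1)).val) / d (τ (α (j.val + 1)))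
  else if α j.val = α (j.val + 1) ∧ k = α (j.val + 1) then
    d (σ j) / d (τ (α (j.val + 1)))
  else 0

noncomputable def Amat {n : ℕ} (d : Fin n → ℝ) (σ τ : Equiv.Perm (Fin n))
    (α : ℕ → Fin n) : Matrix (Fin n) (Fin n) ℝ :=
  Matrix.of fun p q => Aentry d σ τ α (σ.symm p) (τ.symm q)

noncomputable def Lin {n : ℕ} (d y : Fin n → ℝ) (i : Fin n) (c : ℝ) : ℝ :=
  (∑ j, max (y j - y i / d i * d j) 0) + y i / d i * c

lemma th_le {n : ℕ} (d y : Fin n → ℝ) (hd : ∀ i, 0 < d i) (c : ℝ) (i : Fin n) :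
    th d y c ≤ Lin d y i c := by
  unfold th
  exact csInf_le (Set.toFinite _).bddBelow ⟨i, hd i, rfl⟩

lemma th_mem {n : ℕ} (d y : Fin n → ℝ) (hd : ∀ i, 0 < d i) (i0 : Fin n) (c : ℝ) :
    ∃ i, th d y c = Lin d y i c := by
  have h : th d y c ∈ ((fun i => (∑ j, max (y j - y i / d i * d j) 0) + y i / d i * c) ''
    {i : Fin n | 0 < d i}) := by
    unfold th
    exact Set.Nonempty.csInf_mem ⟨_, i0, hd i0, rfl⟩ (Set.toFinite _)
  obtain ⟨i, -, h⟩ := h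
  exact ⟨i, h.symm⟩

lemma psum_lt {n : ℕ} (d : Fin n → ℝ)
    (hw : ∀ I J : Finset (Fin n), I.card < J.card → ∑ i ∈ I, d i < ∑ i ∈ J, d i)
    (σ τ : Equiv.Perm (Fin n)) (j j' : ℕ) (h : j < j') (h' : j' ≤ n) :
    psum d σ j < psum d τ j' := by
  have key : ∀ (σ : Equiv.Perm (Fin n)) (j : ℕ), psum d σ j =
      ∑ i ∈ (Finset.univ.filter (fun i : Fin n => (i : ℕ) < j)).map σ.toEmbedding, d i := by
    intro σ j
    simp [psum, Finset.sum_map]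
  rw [key, key]
  apply hw
  rw [Finset.card_map, Finset.card_map, Fin.card_filter_val_lt, Fin.card_filter_val_lt]
  omega

lemma psum_succ {n : ℕ} (d : Fin n → ℝ) (σ : Equiv.Perm (Fin n)) (k : Fin n) :
    psum d σ ((σ.symm k : ℕ) + 1) = psum d σ (σ.symm k : ℕ) + d k := by
  unfold psum
  have : Finset.univ.filter (fun i : Fin n => (i : ℕ) < (σ.symm k : ℕ) + 1) =
      insert (σ.symm k) (Finset.univ.filter (fun i : Fin n => (i : ℕ) < (σ.symm k : ℕ))) := by
    ext i
    simp only [Finset.mem_filter, Finset.mem_univ, true_and, Finset.mem_insert, Fin.ext_iff]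
    omega
  rw [this, Finset.sum_insert (by simp)]
  simp [add_comm]

lemma lin_sum {n : ℕ} (d y : Fin n → ℝ) (ρ : Equiv.Perm (Fin n)) (i : Fin n) (m : ℕ) :
    Lin d y i (psum d ρ m) = ∑ k : Fin n, (max (y (ρ k) - y i / d i * d (ρ k)) 0 +
      if (k : ℕ) < m then y i / d i * d (ρ k) else 0) := by
  unfold Lin psum
  rw [Finset.sum_add_distrib, ← Finset.sum_filter, Finset.mul_sum,
    Equiv.sum_comp ρ (fun j => max (y j - y i / d i * d j) 0)]

lemma lin_ge {n : ℕ} (d y : Fin n → ℝ) (ρ : Equiv.Perm (Fin n)) (i : Fin n) (m : ℕ) :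
    psum y ρ m ≤ Lin d y i (psum d ρ m) := by
  rw [lin_sum]
  unfold psum
  rw [Finset.sum_filter]
  apply Finset.sum_le_sum
  intro k _
  split_ifs
  · linarith [le_max_left (y (ρ k) - y i / d i * d (ρ k)) 0]
  · linarith [le_max_right (y (ρ k) - y i / d i * d (ρ k)) 0]

lemma lin_eq {n : ℕ} (d y : Fin n → ℝ) (hd : ∀ i, 0 < d i) (ρ : Equiv.Perm (Fin n))
    (i : Fin n) (m : ℕ)
    (h1 : ∀ k : Fin n, (k : ℕ) < m → y i / d i ≤ y (ρ k) / d (ρ k))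
    (h2 : ∀ k : Fin n, m ≤ (k : ℕ) → y (ρ k) / d (ρ k) ≤ y i / d i) :
    Lin d y i (psum d ρ m) = psum y ρ m := by
  rw [lin_sum]
  unfold psum
  rw [Finset.sum_filter]
  apply Finset.sum_congr rfl
  intro k _
  split_ifs with h
  · have := (le_div_iff₀ (hd _)).1 (h1 k h)
    rw [max_eq_left (by linarith)]
    ring
  · have := (div_le_iff₀ (hd _)).1 (h2 k (by omega))
    rw [max_eq_right (by linarith)]
    ring

lemma exists_sort {n : ℕ} (s : Fin n → ℝ) (hs : Function.Injective s) :
    ∃ ρ : Equiv.Perm (Fin n), StrictAnti (s ∘ ρ) := by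
  refine ⟨Tuple.sort (fun i => - s i), ?_⟩
  have h := Tuple.monotone_sort (fun i => - s i)
  have h2 := h.strictMono_of_injective (by
    intro a b hab
    simpa [hs.eq_iff] using hab)
  intro a b hab
  have := h2 hab
  simpa using this

lemma key_lt {n : ℕ} (d y : Fin n → ℝ) (hd : ∀ i, 0 < d i)
    (hs : Function.Injective (fun i => y i / d i))
    (hw : ∀ I J : Finset (Fin n), I.card < J.card → ∑ i ∈ I, d i < ∑ i ∈ J, d i)
    (σ τ : Equiv.Perm (Fin n)) (k : Fin n) (hab : (σ.symm k : ℕ) < (τ.symm k : ℕ))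
    (hE : Emap d y σ k = Emap d y τ k) : False := by
  obtain ⟨ρ, hρ⟩ := exists_sort _ hs
  have hb := (τ.symm k).isLt
  unfold Emap at hE
  rw [psum_succ, psum_succ] at hE
  set a := (σ.symm k : ℕ) with ha
  set b := (τ.symm k : ℕ) with hb'
  set D := psum d ρ (a + 1) with hD
  have huD : psum d σ a < D := psum_lt d hw σ ρ _ _ (by omega) (by omega)
  have hDv : D < psum d τ b + d k := by
    have := psum_succ d τ k
    rw [← hb'] at this
    rw [← this]
    exact psum_lt d hw ρ τ _ _ (by omega) (by omega)
  have huu : psum d σ a < psum d τ b := psum_lt d hw σ τ _ _ (by omega) (by omega)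
  set u := psum d σ a
  set u' := psum d τ b
  have hl := hd k
  set l := d k
  obtain ⟨i, hi⟩ := th_mem d y hd k (u + l)
  obtain ⟨j, hj⟩ := th_mem d y hd k u'
  have i1 := th_le d y hd u i
  have i2 := th_le d y hd (u' + l) i
  have j1 := th_le d y hd u j
  have j2 := th_le d y hd (u' + l) j
  let α : Fin n := ⟨a, by omega⟩
  let β : Fin n := ⟨a + 1, by omega⟩
  have hαβ : y (ρ β) / d (ρ β) < y (ρ α) / d (ρ α) := hρ (by simp [α, β, Fin.lt_def])
  have eα : Lin d y (ρ α) D = psum y ρ (a + 1) := lin_eq d y hd ρ _ _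
    (fun k hk => hρ.antitone (by simp [α, Fin.le_def]; omega))
    (fun k hk => hρ.antitone (by simp [α, Fin.le_def]; omega))
  have eβ : Lin d y (ρ β) D = psum y ρ (a + 1) := lin_eq d y hd ρ _ _
    (fun k hk => hρ.antitone (by simp [β, Fin.le_def]; omega))
    (fun k hk => hρ.antitone (by simp [β, Fin.le_def]; omega))
  have eD := lin_ge d y ρ i (a + 1)
  rw [← hD] at eD
  have gα := th_le d y hd u (ρ α)
  have gβ := th_le d y hd (u' + l) (ρ β)
  unfold Lin at *
  generalize y (ρ β) / d (ρ β) = sβ at *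
  generalize y (ρ α) / d (ρ α) = sα at *
  generalize y i / d i = si at *
  generalize y j / d j = sj at *
  generalize (∑ x, max (y x - si * d x) 0) = ci at *
  generalize (∑ x, max (y x - sj * d x) 0) = cj at *
  generalize (∑ x, max (y x - sα * d x) 0) = cα at *
  generalize (∑ x, max (y x - sβ * d x) 0) = cβ at *
  generalize th d y u = fu at *
  generalize th d y (u + l) = fv at *
  generalize th d y u' = fu' at *
  generalize th d y (u' + l) = fv' at *
  generalize psum y ρ (a + 1) = S at *
  clear_value u u' l D
  have hp : 0 < u' - u := by linarith
  -- defects of the two lines at the endpoints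
  have E1 : (u' - u) * (ci + si * u - fu) + l * (ci + si * (u' + l) - fv')
      + (l * (cj + sj * u - fu) + (u' - u) * (cj + sj * (u' + l) - fv')) = 0 := by
    have : fv' = fv - fu + fu' := by linarith
    rw [this, hi, hj]
    ring
  have z1 := mul_nonneg hp.le (sub_nonneg.2 i1)
  have z2 := mul_nonneg hl.le (sub_nonneg.2 i2)
  have z3 := mul_nonneg hl.le (sub_nonneg.2 j1)
  have z4 := mul_nonneg hp.le (sub_nonneg.2 j2)
  have w1 : (u' - u) * (ci + si * u - fu) = 0 := by linarith
  have w2 : l * (ci + si * (u' + l) - fv') = 0 := by linarith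
  have w1' := (mul_eq_zero.1 w1).resolve_left hp.ne'
  have w2' := (mul_eq_zero.1 w2).resolve_left hl.ne'
  have q1 : sα ≤ si := by
    by_contra hc
    push Not at hc
    nlinarith [mul_pos (sub_pos.2 hc) (sub_pos.2 huD)]
  have q2 : si ≤ sβ := by
    by_contra hc
    push Not at hc
    nlinarith [mul_pos (sub_pos.2 hc) (sub_pos.2 hDv)]
  linarith

/-- If the extreme point map is not injective then either y/d is degenerate or
d is not well-structured. -/
theorem stmt13 (n : ℕ) (hn : 1 ≤ n) (d : Fin n → ℝ) (hd : ∀ i, 0 < d i)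
    (y : Fin n → ℝ) (hnoninj : ¬ Function.Injective (Emap d y)) :
    (∃ i j : Fin n, i ≠ j ∧ y i / d i = y j / d j) ∨
      ¬ (∀ I J : Finset (Fin n), I.card < J.card →
          ∑ i ∈ I, d i < ∑ i ∈ J, d i) := by
  by_contra hcon
  push Not at hcon
  obtain ⟨h1, hw⟩ := hcon
  have hs : Function.Injective (fun i => y i / d i) := by
    intro i j hij
    by_contra hne
    exact h1 i j hne hij
  apply hnoninj
  intro σ τ h
  have hsymm : σ.symm = τ.symm := by
    ext k
    rcases lt_trichotomy (σ.symm k : ℕ) (τ.symm k : ℕ) with hlt | heq | hgt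
    · exact (key_lt d y hd hs hw σ τ k hlt (congrFun h k)).elim
    · exact heq
    · exact (key_lt d y hd hs hw τ σ k hgt (congrFun h k).symm).elim
  rw [← σ.symm_symm, hsymm, τ.symm_symm]
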